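/- Let ζ₆ = e^{πi/3}, let Λ = ℤ[ζ₆] × ℤ[ζ₆] ⊆ ℂ² (Eisenstein integers in each coordinate), and let σ be the ℂ-linear automorphism of ℂ² given by multiplication by ζ₃ = ζ₆² in both coordinates. Then σ(Λ) = Λ, σ has order 3, and there exists a generator vol of ⋀⁴Λ such that the fixed submodule {x ∈ ⋀²Λ : ⋀²(σ|_Λ)(x) = x}, with the restriction of the wedge form determined by vol, is isometric to U⊕A₂(−1). -/

import Mathlib

set_option synthInstance.maxHeartbeats 1000000
set_option maxHeartbeats 1000000

open ExteriorAlgebra Module Matrix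

noncomputable section

/-- `Λ` is a `ℤ`-lattice in `ℂ²`: it is the `ℤ`-span of an `ℝ`-basis of `ℂ²`. -/
def IsComplexTorusLattice (Λ : Submodule ℤ (ℂ × ℂ)) : Prop :=
  ∃ b : Basis (Fin 4) ℝ (ℂ × ℂ), Λ = Submodule.span ℤ (Set.range b)

/-- The image of the `n`-th exterior power under the algebra morphism induced by a linear map
lands in the `n`-th exterior power. -/
lemma map_mem_exteriorPower {R M N : Type*} [CommRing R] [AddCommGroup M] [Module R M]
    [AddCommGroup N] [Module R N] (f : M →ₗ[R] N) (n : ℕ) {x : ExteriorAlgebra R M}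
    (hx : x ∈ ⋀[R]^n M) : ExteriorAlgebra.map f x ∈ ⋀[R]^n N := by
  rw [← ExteriorAlgebra.ιMulti_span_fixedDegree] at hx ⊢
  induction hx using Submodule.span_induction with
  | mem y hy =>
      obtain ⟨m, rfl⟩ := hy
      rw [ExteriorAlgebra.map_apply_ιMulti]
      exact Submodule.subset_span ⟨f ∘ m, rfl⟩
  | zero => simp
  | add a b _ _ ha hb => rw [map_add]; exact Submodule.add_mem _ ha hb
  | smul r a _ ha => rw [_root_.map_smul]; exact Submodule.smul_mem _ r ha

/-- The `n`-th exterior power of a linear map. -/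
def extPowMap {R M N : Type*} [CommRing R] [AddCommGroup M] [Module R M]
    [AddCommGroup N] [Module R N] (n : ℕ) (f : M →ₗ[R] N) : ⋀[R]^n M →ₗ[R] ⋀[R]^n N :=
  LinearMap.restrict (ExteriorAlgebra.map f).toLinearMap
    (fun _ hx => map_mem_exteriorPower f n hx)

/-- The automorphism `σ` of `ℂ²` maps the lattice `Λ` onto itself. -/
def PreservesLattice (σ : (ℂ × ℂ) ≃ₗ[ℂ] (ℂ × ℂ)) (Λ : Submodule ℤ (ℂ × ℂ)) : Prop :=
  Λ.map ((σ.restrictScalars ℤ : (ℂ × ℂ) ≃ₗ[ℤ] (ℂ × ℂ)) : (ℂ × ℂ) →ₗ[ℤ] (ℂ × ℂ)) = Λ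

/-- The restriction `σ|_Λ` of `σ` to the lattice `Λ`, as a `ℤ`-linear automorphism. -/
def latRestrict (σ : (ℂ × ℂ) ≃ₗ[ℂ] (ℂ × ℂ)) (Λ : Submodule ℤ (ℂ × ℂ))
    (h : PreservesLattice σ Λ) : ↥Λ ≃ₗ[ℤ] ↥Λ :=
  (σ.restrictScalars ℤ).ofSubmodules Λ Λ h

/-- The induced endomorphism `⋀²(σ|_Λ)` of `⋀²Λ`. -/
def extSq (σ : (ℂ × ℂ) ≃ₗ[ℂ] (ℂ × ℂ)) (Λ : Submodule ℤ (ℂ × ℂ))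
    (h : PreservesLattice σ Λ) : Module.End ℤ (⋀[ℤ]^2 ↥Λ) :=
  extPowMap 2 (latRestrict σ Λ h).toLinearMap

/-- The invariant lattice `T = {x ∈ ⋀²Λ : ⋀²(σ|_Λ)(x) = x}`. -/
def invLat (σ : (ℂ × ℂ) ≃ₗ[ℂ] (ℂ × ℂ)) (Λ : Submodule ℤ (ℂ × ℂ))
    (h : PreservesLattice σ Λ) : Submodule ℤ (⋀[ℤ]^2 ↥Λ) :=
  LinearMap.ker (extSq σ Λ h - LinearMap.id)

/-- `b` is the wedge form on `⋀²Λ` determined by the generator `vol` of `⋀⁴Λ`, i.e.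
`x ∧ y = b(x,y) • vol`. -/
def IsWedgeForm (Λ : Submodule ℤ (ℂ × ℂ)) (vol : ⋀[ℤ]^4 ↥Λ)
    (b : ⋀[ℤ]^2 ↥Λ →ₗ[ℤ] ⋀[ℤ]^2 ↥Λ →ₗ[ℤ] ℤ) : Prop :=
  ∀ x y : ⋀[ℤ]^2 ↥Λ, (x : ExteriorAlgebra ℤ ↥Λ) * (y : ExteriorAlgebra ℤ ↥Λ)
    = b x y • (vol : ExteriorAlgebra ℤ ↥Λ)

/-- The restriction of the form `b` to the submodule `T` admits Gram matrix `G`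
in some basis; i.e. `(T, b|_T)` is isometric to the lattice with Gram matrix `G`. -/
def HasGramMatrix {M : Type*} [AddCommGroup M] [Module ℤ M] (b : M →ₗ[ℤ] M →ₗ[ℤ] ℤ)
    (T : Submodule ℤ M) {n : ℕ} (G : Matrix (Fin n) (Fin n) ℤ) : Prop :=
  ∃ v : Basis (Fin n) ℤ ↥T, ∀ i j, b (v i : M) (v j : M) = G i j

/-!
The order, the stability of `Λ` and the invariant lattice all come from `σ² + σ + 1 = 0`. Since
`Λ` has a basis `(x, σ x, y, σ y)`, the six wedges of basis vectors show that `⋀²σ` fixes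
`x ∧ σ x` and `y ∧ σ y`, and that its invariants among the mixed wedges are spanned by
`x ∧ y + x ∧ σ y + σ x ∧ σ y` and `x ∧ y + σ x ∧ y + σ x ∧ σ y`. With
`vol = x ∧ σ x ∧ y ∧ σ y`, the wedge form of decomposable bivectors is a determinant: the first
two invariants span `U`, the last two span `A₂(-1)`, and the two planes are orthogonal.
-/

section ExteriorPower

variable {R M N : Type*} [CommRing R] [AddCommGroup M] [Module R M] [AddCommGroup N] [Module R N]
  {n : ℕ}

lemma extPowMap_ιMulti (f : M →ₗ[R] N) (v : Fin n → M) :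
    extPowMap n f (exteriorPower.ιMulti R n v) = exteriorPower.ιMulti R n (f ∘ v) :=
  Subtype.ext (ExteriorAlgebra.map_apply_ιMulti f v)

lemma ιMulti_eq_det_smul (e : Basis (Fin n) R M) (v : Fin n → M) :
    exteriorPower.ιMulti R n v = e.det v • exteriorPower.ιMulti R n e := by
  suffices h : exteriorPower.ιMulti R n =
      (LinearMap.toSpanSingleton R _ (exteriorPower.ιMulti R n e)).compAlternatingMap e.det from
    DFunLike.congr_fun h v
  refine e.ext_alternating fun i hi => ?_
  let σ : Equiv.Perm (Fin n) := Equiv.ofBijective i (Finite.injective_iff_bijective.1 hi)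
  change exteriorPower.ιMulti R n (e ∘ σ) = e.det (e ∘ σ) • exteriorPower.ιMulti R n e
  simp [AlternatingMap.map_perm, e.det_self]

lemma span_ιMulti_basis_eq_top (e : Basis (Fin n) R M) :
    Submodule.span R {exteriorPower.ιMulti R n e} = ⊤ := by
  rw [eq_top_iff, ← exteriorPower.ιMulti_span R n M, Submodule.span_le]
  rintro _ ⟨v, rfl⟩
  exact Submodule.mem_span_singleton.2 ⟨e.det v, (ιMulti_eq_det_smul e v).symm⟩

lemma smul_ιMulti_basis_injective (e : Basis (Fin n) R M) :
    Function.Injective fun c : R => c • exteriorPower.ιMulti R n e := by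
  intro c d hcd
  simpa [e.det_self] using congrArg (exteriorPower.alternatingMapLinearEquiv e.det) hcd

/-- The property `x ∧ y = b(x, y) • vol` of `IsWedgeForm`, for a module over any commutative
ring. -/
def IsWedgePairing (vol : ⋀[R]^4 M) (b : ⋀[R]^2 M →ₗ[R] ⋀[R]^2 M →ₗ[R] R) : Prop :=
  ∀ x y : ⋀[R]^2 M, (x : ExteriorAlgebra R M) * (y : ExteriorAlgebra R M) =
    b x y • (vol : ExteriorAlgebra R M)

lemma IsWedgePairing.apply_ιMulti_ιMulti {e : Basis (Fin 4) R M}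
    {b : ⋀[R]^2 M →ₗ[R] ⋀[R]^2 M →ₗ[R] R} (hb : IsWedgePairing (exteriorPower.ιMulti R 4 e) b)
    (u v : Fin 2 → M) :
    b (exteriorPower.ιMulti R 2 u) (exteriorPower.ιMulti R 2 v) =
      e.det (Fin.append u v) := by
  refine smul_ιMulti_basis_injective e (Subtype.ext ?_)
  beta_reduce
  rw [← ιMulti_eq_det_smul, exteriorPower.ιMulti_apply_coe]
  exact (hb _ _).symm.trans (ExteriorAlgebra.ιMulti_mul_ιMulti u v)

lemma det_basis_comp (e : Basis (Fin n) R M) (s : Fin n → Fin n) :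
    e.det (e ∘ s) = (((1 : Matrix (Fin n) (Fin n) ℤ).submatrix id s).det : R) := by
  rw [e.det_apply, Int.cast_det]
  congr 1
  ext i j
  simp [Basis.toMatrix_apply, Matrix.one_apply, Finsupp.single_apply, eq_comm]

end ExteriorPower

section Wedge

variable (R : Type*) {M N : Type*} [CommRing R] [AddCommGroup M] [Module R M] [AddCommGroup N]
  [Module R N]

/-- The exterior product `x ∧ y ∈ ⋀²M` of two vectors, as a bilinear map. -/
def wedge : M →ₗ[R] M →ₗ[R] ⋀[R]^2 M :=
  LinearMap.mk₂ R (fun x y => exteriorPower.ιMulti R 2 ![x, y])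
    (fun x x' y => AlternatingMap.map_vecCons_add _ _ x x')
    (fun c x y => AlternatingMap.map_vecCons_smul _ _ c x)
    (fun x y y' => Subtype.ext <| by simp [ExteriorAlgebra.ιMulti_apply, mul_add])
    (fun c x y => Subtype.ext <| by simp [ExteriorAlgebra.ιMulti_apply])

lemma wedge_apply (x y : M) : wedge R x y = exteriorPower.ιMulti R 2 ![x, y] := rfl

lemma wedge_self (x : M) : wedge R x x = 0 :=
  (exteriorPower.ιMulti R 2).map_eq_zero_of_eq _ (by rfl : ![x, x] 0 = ![x, x] 1) (by decide)

lemma wedge_swap (x y : M) : wedge R x y = -wedge R y x := by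
  have h := wedge_self R (x + y)
  simp only [map_add, LinearMap.add_apply, wedge_self, zero_add, add_zero] at h
  exact eq_neg_of_add_eq_zero_right h

lemma extPowMap_wedge (f : M →ₗ[R] N) (x y : M) :
    extPowMap 2 f (wedge R x y) = wedge R (f x) (f y) := by
  rw [wedge_apply, extPowMap_ιMulti, wedge_apply]
  congr 1
  ext i
  fin_cases i <;> rfl

end Wedge

/-- The six increasing pairs of indices in `Fin 4`, in lexicographic order. -/
def increasingPair : Fin 6 → Fin 2 ↪o Fin 4 :=
  ![OrderEmbedding.ofStrictMono ![0, 1] (by decide),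
    OrderEmbedding.ofStrictMono ![0, 2] (by decide),
    OrderEmbedding.ofStrictMono ![0, 3] (by decide),
    OrderEmbedding.ofStrictMono ![1, 2] (by decide),
    OrderEmbedding.ofStrictMono ![1, 3] (by decide),
    OrderEmbedding.ofStrictMono ![2, 3] (by decide)]

lemma increasingPair_injective : Function.Injective increasingPair := by
  decide

lemma bijective_ofFinEmbEquiv_increasingPair :
    Function.Bijective fun i => Set.powersetCard.ofFinEmbEquiv (increasingPair i) := by
  refine (Nat.bijective_iff_injective_and_card _).2
    ⟨Set.powersetCard.ofFinEmbEquiv.injective.comp increasingPair_injective, ?_⟩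
  rw [Set.powersetCard.card]
  simp [Nat.choose]

/-- The Gram matrix of the wedge form on `⋀²` of a module of rank four, in the lexicographic
basis. -/
def wedgeGram : Matrix (Fin 6) (Fin 6) ℤ :=
  !![0, 0, 0, 0, 0, 1; 0, 0, 0, 0, -1, 0; 0, 0, 0, 1, 0, 0;
     0, 0, 1, 0, 0, 0; 0, -1, 0, 0, 0, 0; 1, 0, 0, 0, 0, 0]

lemma det_append_increasingPair (i j : Fin 6) :
    ((1 : Matrix (Fin 4) (Fin 4) ℤ).submatrix id
      (Fin.append (increasingPair i) (increasingPair j))).det = wedgeGram i j := by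
  fin_cases i <;> fin_cases j <;> rfl

section RankFour

variable {R M : Type*} [CommRing R] [AddCommGroup M] [Module R M] (e : Basis (Fin 4) R M)
  {f : M →ₗ[R] M} {b : ⋀[R]^2 M →ₗ[R] ⋀[R]^2 M →ₗ[R] R}

/-- The basis of `⋀²M` given by the `e i ∧ e j` with `i < j`, in lexicographic order. -/
def extSqBasis : Basis (Fin 6) R (⋀[R]^2 M) :=
  (e.exteriorPower 2).reindex (Equiv.ofBijective _ bijective_ofFinEmbEquiv_increasingPair).symm

lemma extSqBasis_apply (i : Fin 6) :
    extSqBasis e i = exteriorPower.ιMulti R 2 (e ∘ increasingPair i) := by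
  simp [extSqBasis, exteriorPower.ιMulti_family]

lemma coe_extSqBasis :
    ⇑(extSqBasis e) = ![wedge R (e 0) (e 1), wedge R (e 0) (e 2), wedge R (e 0) (e 3),
      wedge R (e 1) (e 2), wedge R (e 1) (e 3), wedge R (e 2) (e 3)] := by
  ext1 i
  rw [extSqBasis_apply]
  fin_cases i <;>
  · refine congrArg _ (funext fun k => ?_)
    fin_cases k <;> rfl

variable {e} in
lemma IsWedgePairing.apply_extSqBasis (hb : IsWedgePairing (exteriorPower.ιMulti R 4 e) b)
    (i j : Fin 6) :
    b (extSqBasis e i) (extSqBasis e j) = (wedgeGram i j : R) := by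
  have happend : Fin.append (e ∘ increasingPair i) (e ∘ increasingPair j) =
      e ∘ Fin.append (increasingPair i) (increasingPair j) := by
    ext k
    induction k using Fin.addCases with
    | left k => simp only [Fin.append_left, Function.comp_apply]
    | right k => simp only [Fin.append_right, Function.comp_apply]
  rw [extSqBasis_apply, extSqBasis_apply, hb.apply_ιMulti_ιMulti, happend, det_basis_comp,
    det_append_increasingPair]

lemma extPowMap_extSqBasis (hf : ∀ v, f (f v) + f v + v = 0) (he1 : e 1 = f (e 0))
    (he3 : e 3 = f (e 2)) (i : Fin 6) :
    extPowMap 2 f (extSqBasis e i) =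
      ![extSqBasis e 0,
        extSqBasis e 4,
        -extSqBasis e 3 - extSqBasis e 4,
        -extSqBasis e 2 - extSqBasis e 4,
        extSqBasis e 1 + extSqBasis e 2 + extSqBasis e 3 + extSqBasis e 4,
        extSqBasis e 5] i := by
  have hff (v : M) : f (f v) = -f v - v := by
    linear_combination (norm := abel) hf v
  have h10 := wedge_swap R (f (e 0)) (e 0)
  have h32 := wedge_swap R (f (e 2)) (e 2)
  fin_cases i <;>
    simp [coe_extSqBasis, extPowMap_wedge, he1, he3, hff, wedge_self, h10, h32] <;>
    abel

lemma extSqBasis_repr_extPowMap (hf : ∀ v, f (f v) + f v + v = 0) (he1 : e 1 = f (e 0))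
    (he3 : e 3 = f (e 2)) (x : ⋀[R]^2 M) :
    (extSqBasis e).repr (extPowMap 2 f x) =
      let c := (extSqBasis e).repr x
      ![c 0, c 4, c 4 - c 3, c 4 - c 2, c 1 - c 2 - c 3 + c 4, c 5] := by
  nth_rw 1 [← (extSqBasis e).sum_repr x]
  ext k
  simp only [map_add, _root_.map_smul, extPowMap_extSqBasis e hf he1 he3, Fin.sum_univ_six]
  fin_cases k <;> simp <;> ring

lemma extPowMap_eq_self_iff (hf : ∀ v, f (f v) + f v + v = 0) (he1 : e 1 = f (e 0))
    (he3 : e 3 = f (e 2)) (x : ⋀[R]^2 M) :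
    extPowMap 2 f x = x ↔
      (extSqBasis e).repr x 1 = (extSqBasis e).repr x 2 + (extSqBasis e).repr x 3 ∧
      (extSqBasis e).repr x 4 = (extSqBasis e).repr x 2 + (extSqBasis e).repr x 3 := by
  rw [(extSqBasis e).ext_elem_iff, extSqBasis_repr_extPowMap e hf he1 he3]
  set c := (extSqBasis e).repr x
  constructor
  · intro h
    have hc1 : c 4 = c 1 := h 1
    have hc2 : c 4 - c 3 = c 2 := h 2
    exact ⟨by linear_combination hc2 - hc1, by linear_combination hc2⟩
  · rintro ⟨hc1, hc4⟩ k
    fin_cases k <;> simp [hc1, hc4]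

/-- A basis of the invariants of `⋀²f`, where `f² + f + 1 = 0` and `e = (x, f x, y, f y)`:
the vectors `x ∧ f x`, `y ∧ f y`, `x ∧ y + x ∧ f y + f x ∧ f y`, `x ∧ y + f x ∧ y + f x ∧ f y`. -/
def invariantVector : Fin 4 → ⋀[R]^2 M :=
  ![extSqBasis e 0, extSqBasis e 5,
    extSqBasis e 1 + extSqBasis e 2 + extSqBasis e 4,
    extSqBasis e 1 + extSqBasis e 3 + extSqBasis e 4]

lemma linearIndependent_invariantVector : LinearIndependent R (invariantVector e) := by
  rw [Fintype.linearIndependent_iff]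
  intro g hg
  have hcoord (k : Fin 6) : (extSqBasis e).repr (∑ i, g i • invariantVector e i) k = 0 := by
    simp [hg]
  have hg0 : g 0 = 0 := by simpa [Fin.sum_univ_four, invariantVector] using hcoord 0
  have hg1 : g 1 = 0 := by simpa [Fin.sum_univ_four, invariantVector] using hcoord 5
  have hg2 : g 2 = 0 := by simpa [Fin.sum_univ_four, invariantVector] using hcoord 2
  have hg3 : g 3 = 0 := by simpa [Fin.sum_univ_four, invariantVector] using hcoord 3
  simp [Fin.forall_fin_succ, hg0, hg1, hg2, hg3]

lemma span_invariantVector (hf : ∀ v, f (f v) + f v + v = 0) (he1 : e 1 = f (e 0))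
    (he3 : e 3 = f (e 2)) :
    Submodule.span R (Set.range (invariantVector e)) =
      LinearMap.ker (extPowMap 2 f - LinearMap.id) := by
  ext x
  rw [Submodule.mem_span_range_iff_exists_fun, LinearMap.mem_ker, LinearMap.sub_apply, sub_eq_zero,
    LinearMap.id_apply, extPowMap_eq_self_iff e hf he1 he3]
  constructor
  · rintro ⟨c, rfl⟩
    simp [Fin.sum_univ_four, invariantVector]
  · rintro ⟨hx1, hx4⟩
    let c := (extSqBasis e).repr x
    refine ⟨![c 0, c 5, c 2, c 3], ?_⟩
    conv_rhs => rw [← (extSqBasis e).sum_repr x]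
    simp only [Fin.sum_univ_four, Fin.sum_univ_six, invariantVector, hx1, hx4, Matrix.cons_val, c]
    module

lemma exists_basis_ker_extPowMap_sub_id (hf : ∀ v, f (f v) + f v + v = 0) (he1 : e 1 = f (e 0))
    (he3 : e 3 = f (e 2)) :
    ∃ v : Basis (Fin 4) R (LinearMap.ker (extPowMap 2 f - LinearMap.id)),
      ∀ i, (v i : ⋀[R]^2 M) = invariantVector e i := by
  rw [← span_invariantVector e hf he1 he3]
  exact ⟨Basis.span (linearIndependent_invariantVector e), fun i =>
    congrArg Subtype.val (Basis.span_apply _ i)⟩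

variable {e} in
lemma IsWedgePairing.apply_invariantVector (hb : IsWedgePairing (exteriorPower.ιMulti R 4 e) b)
    (i j : Fin 4) :
    b (invariantVector e i) (invariantVector e j) =
      ((!![0, 1, 0, 0; 1, 0, 0, 0; 0, 0, -2, -1; 0, 0, -1, -2] i j : ℤ) : R) := by
  fin_cases i <;> fin_cases j <;>
    simp [invariantVector, hb.apply_extSqBasis, wedgeGram] <;>
    norm_num

end RankFour

lemma hasGramMatrix_ker_extPowMap_sub_id {M : Type*} [AddCommGroup M] [Module ℤ M]
    (e : Basis (Fin 4) ℤ M) {f : M →ₗ[ℤ] M} (hf : ∀ v, f (f v) + f v + v = 0)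
    (he1 : e 1 = f (e 0)) (he3 : e 3 = f (e 2)) {b : ⋀[ℤ]^2 M →ₗ[ℤ] ⋀[ℤ]^2 M →ₗ[ℤ] ℤ}
    (hb : IsWedgePairing (exteriorPower.ιMulti ℤ 4 e) b) :
    HasGramMatrix b (LinearMap.ker (extPowMap 2 f - LinearMap.id))
      !![0, 1, 0, 0; 1, 0, 0, 0; 0, 0, -2, -1; 0, 0, -1, -2] := by
  obtain ⟨v, hv⟩ := exists_basis_ker_extPowMap_sub_id e hf he1 he3
  refine ⟨v, fun i j => ?_⟩
  refine Eq.trans ?_ ((hb.apply_invariantVector i j).trans Int.cast_id)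
  exact congrArg₂ (fun x y => b x y) (hv i) (hv j)

lemma exp_pi_mul_I_div_three_sq :
    Complex.exp (Real.pi * Complex.I / 3) ^ 2 = Complex.exp (Real.pi * Complex.I / 3) - 1 := by
  have h := Complex.isPrimitiveRoot_exp 6 (by norm_num)
  have hroot := h.isRoot_cyclotomic (by norm_num)
  rw [show (2 * Real.pi * Complex.I / (6 : ℕ) : ℂ) = Real.pi * Complex.I / 3 by push_cast; ring,
    Polynomial.cyclotomic_six] at hroot
  simp only [Polynomial.IsRoot.def, Polynomial.eval_add, Polynomial.eval_sub, Polynomial.eval_pow,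
    Polynomial.eval_X, Polynomial.eval_one] at hroot
  linear_combination hroot

section CubeRoot

variable {K : Type*} [CommRing K] {ω : K}

lemma linearIndependent_one_of_sq_add_add_one [CharZero K] (hω : ω ^ 2 + ω + 1 = 0) :
    LinearIndependent ℤ ![1, ω] := by
  rw [LinearIndependent.pair_iff]
  intro a b hab
  simp only [zsmul_eq_mul, mul_one] at hab
  have hnorm : a ^ 2 - a * b + b ^ 2 = 0 := by
    have hcast : ((a ^ 2 - a * b + b ^ 2 : ℤ) : K) = 0 := by
      push_cast
      -- The conjugate of `a + b * ω` is `a - b - b * ω`.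
      linear_combination (a - b - b * ω) * hab + b ^ 2 * hω
    exact_mod_cast hcast
  constructor <;> nlinarith [sq_nonneg (2 * a - b), sq_nonneg (2 * b - a), sq_nonneg a]

lemma mul_mem_span_one_pair (hω : ω ^ 2 + ω + 1 = 0) {z : K}
    (hz : z ∈ Submodule.span ℤ ({1, ω} : Set K)) :
    ω * z ∈ Submodule.span ℤ ({1, ω} : Set K) := by
  rw [Submodule.mem_span_pair] at hz ⊢
  obtain ⟨a, b, rfl⟩ := hz
  refine ⟨-b, a - b, ?_⟩
  simp only [zsmul_eq_mul]
  push_cast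
  linear_combination -b * hω

lemma span_one_sub_one (ζ : K) :
    Submodule.span ℤ ({1, ζ - 1} : Set K) = Submodule.span ℤ {1, ζ} := by
  ext z
  simp only [Submodule.mem_span_pair]
  constructor
  · rintro ⟨a, b, rfl⟩
    exact ⟨a - b, b, by module⟩
  · rintro ⟨a, b, rfl⟩
    exact ⟨a + b, b, by module⟩

end CubeRoot

lemma exists_basis_span_pair_prod {R M : Type*} [Ring R] [AddCommGroup M] [Module R M] {x y : M}
    (h : LinearIndependent R ![x, y]) :
    ∃ e : Basis (Fin 4) R ((Submodule.span R {x, y}).prod (Submodule.span R {x, y})),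
      ∀ i, (e i : M × M) = ![(x, 0), (y, 0), (0, x), (0, y)] i := by
  have hv : ![(x, 0), (y, 0), (0, x), (0, y)] =
      Sum.elim (LinearMap.inl R M M ∘ ![x, y]) (LinearMap.inr R M M ∘ ![x, y]) ∘
        finSumFinEquiv.symm := by
    ext1 i
    fin_cases i <;> rfl
  have hli : LinearIndependent R ![(x, 0), (y, 0), (0, x), (0, y)] := by
    rw [hv]
    exact (linearIndependent_inl_union_inr' h h).comp _ finSumFinEquiv.symm.injective
  have hspan : Submodule.span R (Set.range ![(x, 0), (y, 0), (0, x), (0, y)]) =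
      (Submodule.span R {x, y}).prod (Submodule.span R {x, y}) := by
    rw [hv, finSumFinEquiv.symm.surjective.range_comp, Set.Sum.elim_range, Set.range_comp,
      Set.range_comp, Matrix.range_cons_cons_empty, LinearMap.span_inl_union_inr]
  refine ⟨(Basis.span hli).map (LinearEquiv.ofEq _ _ hspan), fun i => ?_⟩
  simp [Basis.span_apply]

lemma orderOf_eq_three_of_sq_add_add_one {R V : Type*} [Semiring R] [AddCommGroup V] [Module R V]
    [IsAddTorsionFree V] [Nontrivial V] {g : V ≃ₗ[R] V} (hg : ∀ v, g (g v) + g v + v = 0) :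
    orderOf g = 3 := by
  refine orderOf_eq_prime (LinearEquiv.ext fun v => ?_) fun h1 => ?_
  · change g (g (g v)) = v
    linear_combination (norm := abel) hg (g v) - hg v
  · obtain ⟨v, hv⟩ := exists_ne (0 : V)
    have h3 : 3 • v = 0 := by
      simpa [h1, succ_nsmul] using hg v
    exact hv ((nsmul_eq_zero_iff_right (by norm_num)).1 h3)

lemma preservesLattice_of_forall_mem {σ : (ℂ × ℂ) ≃ₗ[ℂ] (ℂ × ℂ)} {Λ : Submodule ℤ (ℂ × ℂ)}
    (hσ : ∀ v, σ (σ v) + σ v + v = 0) (hΛ : ∀ v ∈ Λ, σ v ∈ Λ) : PreservesLattice σ Λ := by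
  refine le_antisymm (Submodule.map_le_iff_le_comap.2 hΛ) fun v hv => ?_
  refine ⟨-(σ v + v), Λ.neg_mem (Λ.add_mem (hΛ v hv) hv), ?_⟩
  change σ (-(σ v + v)) = v
  rw [map_neg, map_add]
  linear_combination (norm := abel) -hσ v

/-- For `Λ = ℤ[ζ₆] × ℤ[ζ₆]` (Eisenstein integers, `ζ₆ = exp(πi/3)`) and `σ` the
multiplication by `ζ₃ = ζ₆²` in both coordinates: `σ` preserves `Λ`, has order 3, and for a
suitable generator `vol` of `⋀⁴Λ` the invariant lattice, with the wedge form determined by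
`vol`, is isometric to `U ⊕ A₂(-1)`. -/
theorem stmt_16 (ζ₆ : ℂ) (hζ : ζ₆ = Complex.exp (Real.pi * Complex.I / 3))
    (Λ : Submodule ℤ (ℂ × ℂ))
    (hΛ : Λ = (Submodule.span ℤ ({1, ζ₆} : Set ℂ)).prod
        (Submodule.span ℤ ({1, ζ₆} : Set ℂ)))
    (σ : (ℂ × ℂ) ≃ₗ[ℂ] (ℂ × ℂ))
    (hσ : ∀ z w : ℂ, σ (z, w) = (ζ₆ ^ 2 * z, ζ₆ ^ 2 * w)) :
    PreservesLattice σ Λ ∧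
    orderOf σ = 3 ∧
    ∀ (h : PreservesLattice σ Λ),
      ∃ vol : ⋀[ℤ]^4 ↥Λ, Submodule.span ℤ {vol} = ⊤ ∧
        ∀ b : ⋀[ℤ]^2 ↥Λ →ₗ[ℤ] ⋀[ℤ]^2 ↥Λ →ₗ[ℤ] ℤ, IsWedgeForm Λ vol b →
          HasGramMatrix b (invLat σ Λ h)
            !![0, 1, 0, 0; 1, 0, 0, 0; 0, 0, -2, -1; 0, 0, -1, -2] := by
  have hq : ζ₆ ^ 2 = ζ₆ - 1 := hζ ▸ exp_pi_mul_I_div_three_sq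
  have hω : (ζ₆ ^ 2) ^ 2 + ζ₆ ^ 2 + 1 = 0 := by
    linear_combination (ζ₆ ^ 2 + ζ₆ + 1) * hq
  obtain rfl : Λ = (Submodule.span ℤ {1, ζ₆ ^ 2}).prod (Submodule.span ℤ {1, ζ₆ ^ 2}) := by
    rw [hΛ, hq, span_one_sub_one]
  have hquad : ∀ v, σ (σ v) + σ v + v = 0 := by
    rintro ⟨z, w⟩
    rw [hσ, hσ, Prod.mk_add_mk, Prod.mk_add_mk, Prod.mk_eq_zero]
    exact ⟨by linear_combination z * hω, by linear_combination w * hω⟩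
  have hmem : ∀ v ∈ (Submodule.span ℤ {1, ζ₆ ^ 2}).prod (Submodule.span ℤ {1, ζ₆ ^ 2}),
      σ v ∈ (Submodule.span ℤ {1, ζ₆ ^ 2}).prod (Submodule.span ℤ {1, ζ₆ ^ 2}) := by
    rintro ⟨z, w⟩ ⟨hz, hw⟩
    rw [hσ]
    exact ⟨mul_mem_span_one_pair hω hz, mul_mem_span_one_pair hω hw⟩
  refine ⟨preservesLattice_of_forall_mem hquad hmem, orderOf_eq_three_of_sq_add_add_one hquad,
    fun h => ?_⟩
  obtain ⟨e, he⟩ := exists_basis_span_pair_prod (linearIndependent_one_of_sq_add_add_one hω)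
  have he1 : (e 1 : ℂ × ℂ) = σ (e 0) := by simp [he, hσ]
  have he3 : (e 3 : ℂ × ℂ) = σ (e 2) := by simp [he, hσ]
  exact ⟨exteriorPower.ιMulti ℤ 4 e, span_ιMulti_basis_eq_top e, fun b hb =>
    hasGramMatrix_ker_extPowMap_sub_id e (fun v => Subtype.ext (hquad v))
      (Subtype.ext he1) (Subtype.ext he3) hb⟩
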